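/- Let X be a smooth extremal surface of degree q+1 in ℙ³(k) and let L be any line on X. Then the set of lines M on X with M ≠ L and M meeting L has cardinality exactly q(q²+1). -/

import Mathlib

open Module

/-! Basic setup: `k` is an algebraically closed field of characteristic `p > 0`,
`q = p^e`.  We model ℙ³(k) via linear subspaces of `k⁴ = Fin 4 → k`:
points, lines and planes of ℙ³(k) are subspaces of dimension 1, 2 and 3
respectively.  A hypersurface cut out by a homogeneous form is recorded by its
affine cone in `k⁴`. -/

/-- The Frobenius form in 4 variables determined by a 4×4 matrix `A`:
`∑ i j, A i j * x i ^ q * x j`, a homogeneous form of degree `q+1`. -/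
def frobForm {k : Type*} [Field k] (q : ℕ) (A : Matrix (Fin 4) (Fin 4) k)
    (x : Fin 4 → k) : k :=
  ∑ i, ∑ j, A i j * x i ^ q * x j

/-- The affine cone in `k⁴` of the extremal surface in ℙ³(k) cut out by the
Frobenius form with matrix `A`; a point of ℙ³(k) lies on the surface iff its
homogeneous coordinate representatives lie in this set. -/
def extremalCone (k : Type*) [Field k] (q : ℕ) (A : Matrix (Fin 4) (Fin 4) k) :
    Set (Fin 4 → k) :=
  {x | frobForm q A x = 0}

/-- A point of ℙ³(k): a 1-dimensional subspace of `k⁴`. -/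
def IsPoint {k : Type*} [Field k] (c : Submodule k (Fin 4 → k)) : Prop :=
  finrank k c = 1

/-- A line of ℙ³(k): a 2-dimensional subspace of `k⁴`. -/
def IsLine {k : Type*} [Field k] (L : Submodule k (Fin 4 → k)) : Prop :=
  finrank k L = 2

/-- A plane of ℙ³(k): a 3-dimensional subspace of `k⁴`. -/
def IsPlane {k : Type*} [Field k] (H : Submodule k (Fin 4 → k)) : Prop :=
  finrank k H = 3

/-- `L` is a line lying on the surface with affine cone `X`. -/
def IsLineOn {k : Type*} [Field k] (X : Set (Fin 4 → k))
    (L : Submodule k (Fin 4 → k)) : Prop :=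
  IsLine L ∧ (L : Set (Fin 4 → k)) ⊆ X

/-- Two lines of ℙ³(k) meet iff the corresponding subspaces of `k⁴` intersect
nontrivially. -/
def MeetsLine {k : Type*} [Field k] (L M : Submodule k (Fin 4 → k)) : Prop :=
  L ⊓ M ≠ ⊥

/-- Two lines of ℙ³(k) are skew iff the corresponding subspaces of `k⁴`
intersect trivially. -/
def SkewLine {k : Type*} [Field k] (L M : Submodule k (Fin 4 → k)) : Prop :=
  L ⊓ M = ⊥

/-- `IsStarAt q X S c`: `S` is a star on the surface with affine cone `X`,
centered at the point `c`, i.e. a set of `q+1` distinct lines on the surface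
all passing through `c`. -/
def IsStarAt {k : Type*} [Field k] (q : ℕ) (X : Set (Fin 4 → k))
    (S : Set (Submodule k (Fin 4 → k))) (c : Submodule k (Fin 4 → k)) : Prop :=
  IsPoint c ∧ S.ncard = q + 1 ∧ ∀ L ∈ S, IsLineOn X L ∧ c ≤ L

/-- `S` is a star on the surface with affine cone `X`. -/
def IsStar {k : Type*} [Field k] (q : ℕ) (X : Set (Fin 4 → k))
    (S : Set (Submodule k (Fin 4 → k))) : Prop :=
  ∃ c, IsStarAt q X S c

/-- `c` is a star point of the surface with affine cone `X`. -/
def IsStarPoint {k : Type*} [Field k] (q : ℕ) (X : Set (Fin 4 → k))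
    (c : Submodule k (Fin 4 → k)) : Prop :=
  ∃ S, IsStarAt q X S c

/-- `H` is a star plane of the surface with affine cone `X`, centered at `c`:
the plane section `X ∩ H` is the union of a star centered at `c`. -/
def IsStarPlaneAt {k : Type*} [Field k] (q : ℕ) (X : Set (Fin 4 → k))
    (H c : Submodule k (Fin 4 → k)) : Prop :=
  IsPlane H ∧ ∃ S, IsStarAt q X S c ∧
    X ∩ (H : Set (Fin 4 → k)) = ⋃ L ∈ S, (L : Set (Fin 4 → k))

/-- An element of `Aut(X)`: since every projective linear automorphism of
ℙ³(k) is represented by an invertible linear map of `k⁴` (uniquely up to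
scalars, which act trivially on subspaces and preserve every cone), `g ∈
PGL(4,k)` with `g(X) = X` corresponds to a linear automorphism of `k⁴`
mapping the affine cone `X` onto itself. -/
def PreservesCone {k : Type*} [Field k] (X : Set (Fin 4 → k))
    (g : (Fin 4 → k) ≃ₗ[k] (Fin 4 → k)) : Prop :=
  (⇑g) '' X = X

/-!
Write the extremal surface as `B x x = 0` with `B` a nondegenerate form, linear in its right and
`q`-semilinear in its left argument. Polarization shows that `B` vanishes identically on the
subspaces of `k⁴` representing lines on the surface. So if such a line `M ≠ L` meets `L` in the
point `⟨v⟩`, then the plane `M + L` is both the right and the left orthogonal of `v`.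

* On the line `L`, the points whose right and left orthogonals agree are the zeros of a
  nondegenerate form of degree `q ^ 2 + 1`, sesquilinear with respect to the `q ^ 2`-power map.
  Such a form in two variables has distinct zeros, by the separability of the associated polynomial,
  so there are `q ^ 2 + 1` of these points.
* If the orthogonals of `v` agree, `B` induces a nondegenerate form in two variables on `v^⊥ / ⟨v⟩`,
  whose `q + 1` zeros are the lines on the surface through `⟨v⟩`. One of them is `L`, leaving `q`.
-/

lemma ncard_eq_mul_of_ncard_fiber_eq {α β : Type*} {s : Set α} {t : Set β} {f : α → β} {n : ℕ}
    (hn : n ≠ 0) (hf : Set.MapsTo f s t) (hfiber : ∀ b ∈ t, {a ∈ s | f a = b}.ncard = n) :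
    s.ncard = t.ncard * n := by
  have fiberEquiv (b : t) : Nonempty ({a : s // hf.restrict f s t a = b} ≃ Fin n) := by
    have hcard : Nat.card {a : s // hf.restrict f s t a = b} = n := by
      rw [← hfiber b b.2, ← Nat.card_coe_set_eq]
      exact Nat.card_congr <| (Equiv.subtypeEquivRight fun a ↦ Subtype.ext_iff).trans
        (Equiv.subtypeSubtypeEquivSubtypeInter (· ∈ s) (f · = b))
    exact ⟨(Nat.equivFinOfCardPos (hcard ▸ hn)).trans (finCongr hcard)⟩
  rw [← Nat.card_coe_set_eq, ← Nat.card_coe_set_eq t]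
  calc Nat.card s = Nat.card (t × Fin n) :=
        Nat.card_congr <| (Equiv.sigmaFiberEquiv (hf.restrict f s t)).symm.trans <|
          (Equiv.sigmaCongrRight fun b ↦ (fiberEquiv b).some).trans (Equiv.sigmaEquivProd t (Fin n))
    _ = Nat.card t * n := by rw [Nat.card_prod, Nat.card_fin]

section Field

variable {k : Type*} [Field k]

/-- The endomorphism `σ` of `k` is `a ↦ a ^ q`, and `q` vanishes in `k`, as for a nontrivial iterate
of the Frobenius endomorphism. For such `σ`, the function `x ↦ B x x` given by a form `B` that is
`σ`-semilinear in its left argument is a Frobenius form of degree `q + 1`. -/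
structure IsFrobeniusPower (σ : k →+* k) (q : ℕ) : Prop where
  map_eq_pow (a : k) : σ a = a ^ q
  natCast_eq_zero : (q : k) = 0

namespace IsFrobeniusPower

variable {σ τ : k →+* k} {q r : ℕ}

lemma iterateFrobenius {p e : ℕ} [Fact p.Prime] [CharP k p] (he : e ≠ 0) :
    IsFrobeniusPower (iterateFrobenius k p e) (p ^ e) where
  map_eq_pow := iterateFrobenius_def p e
  natCast_eq_zero := by rw [Nat.cast_pow, CharP.cast_eq_zero, zero_pow he]

lemma comp (hσ : IsFrobeniusPower σ q) (hτ : IsFrobeniusPower τ r) :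
    IsFrobeniusPower (σ.comp τ) (r * q) where
  map_eq_pow a := by rw [RingHom.comp_apply, hσ.map_eq_pow, hτ.map_eq_pow, pow_mul]
  natCast_eq_zero := by rw [Nat.cast_mul, hσ.natCast_eq_zero, mul_zero]

lemma two_le (hσ : IsFrobeniusPower σ q) : 2 ≤ q := by
  have h0 : q ≠ 0 := by
    rintro rfl
    simpa using hσ.map_eq_pow 0
  have h1 : q ≠ 1 := by
    rintro rfl
    simpa using hσ.natCast_eq_zero
  lia

lemma exists_map_ne_self [IsSepClosed k] (hσ : IsFrobeniusPower σ q) : ∃ t, σ t ≠ t := by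
  obtain ⟨t, ht⟩ := IsSepClosed.exists_root_C_mul_X_pow_add_C_mul_X_add_C (1 : k) (-1) (-1)
    hσ.natCast_eq_zero hσ.two_le (neg_ne_zero.2 one_ne_zero)
  refine ⟨t, fun h ↦ one_ne_zero (α := k) ?_⟩
  rw [hσ.map_eq_pow] at h
  linear_combination h - ht

open Polynomial in
lemma ncard_zeros [IsSepClosed k] (hσ : IsFrobeniusPower σ q) {a b c d : k} (hd : d ≠ 0)
    (hdet : a * d - b * c ≠ 0) :
    {t | a + t * b + σ t * c + σ t * t * d = 0}.ncard = q + 1 := by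
  let P : k[X] := C a + X * C b + X ^ q * C c + X ^ (q + 1) * C d
  have hq := hσ.two_le
  have hP : P.natDegree = q + 1 := by
    simp only [P]
    compute_degree!
    simp [hd, show q ≠ 0 by lia]
  have hP' : derivative P = C b + X ^ q * C d := by
    simp [P, derivative_X_pow, hσ.natCast_eq_zero]
  -- `d * P - (d * X + c) * P'` is the constant `a * d - b * c`.
  have hsep : P.Separable := by
    refine ⟨C ((a * d - b * c)⁻¹ * d), -C (a * d - b * c)⁻¹ * (C d * X + C c), ?_⟩
    have hinv : C (a * d - b * c)⁻¹ * C (a * d - b * c) = 1 := by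
      rw [← C_mul, inv_mul_cancel₀ hdet, C_1]
    rw [hP', ← hinv]
    simp only [P, C_mul, C_sub]
    ring
  have hroots : {t | a + t * b + σ t * c + σ t * t * d = 0} = P.rootSet k := by
    ext t
    rw [mem_rootSet, and_iff_right hsep.ne_zero]
    simp only [P, hσ.map_eq_pow, pow_succ, aeval_def, eval₂_add, eval₂_mul, eval₂_C, eval₂_X,
      eval₂_pow, Algebra.algebraMap_self_apply, Set.mem_ofPred_eq]
  rw [hroots, ← Nat.card_coe_set_eq, Nat.card_eq_fintype_card,
    card_rootSet_eq_natDegree hsep (IsSepClosed.splits_codomain _ hsep), hP]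

end IsFrobeniusPower

section LinearAlgebra

variable {V : Type*} [AddCommGroup V] [Module k V]

lemma exists_mem_ne_zero_of_finrank_ne_zero {W : Submodule k V} (hW : finrank k W ≠ 0) :
    ∃ v ∈ W, v ≠ 0 :=
  W.exists_mem_ne_zero_of_ne_bot fun h ↦ hW (by rw [h, finrank_bot])

lemma exists_span_pair_eq_of_finrank_eq_two {W : Submodule k V} (hW : finrank k W = 2) {f : V}
    (hf : f ∈ W) (hf0 : f ≠ 0) :
    ∃ e ∈ W, LinearIndependent k ![f, e] ∧ Submodule.span k {f, e} = W := by
  have : FiniteDimensional k W := .of_finrank_eq_succ hW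
  have hlt : k ∙ f < W := by
    refine lt_of_le_of_ne ((Submodule.span_singleton_le_iff_mem f W).2 hf) fun h ↦ ?_
    rw [← h, finrank_span_singleton hf0] at hW
    lia
  obtain ⟨e, heW, hef⟩ := SetLike.exists_of_lt hlt
  have hind : LinearIndependent k ![f, e] :=
    (LinearIndependent.pair_iff' hf0).2 fun a h ↦ hef (Submodule.mem_span_singleton.2 ⟨a, h⟩)
  refine ⟨e, heW, hind, Submodule.eq_of_le_of_finrank_eq ?_ ?_⟩
  · exact Submodule.span_le.2 (Set.pair_subset hf heW)
  · rw [hW, ← Matrix.range_cons_cons_empty f e ![], finrank_span_eq_card hind, Fintype.card_fin]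

lemma injective_span_singleton_add_smul {f e : V} (hfe : LinearIndependent k ![f, e]) :
    Function.Injective fun t : k ↦ k ∙ (e + t • f) := by
  intro t t' (h : k ∙ (e + t • f) = k ∙ (e + t' • f))
  obtain ⟨a, ha⟩ := Submodule.mem_span_singleton.1 (h ▸ Submodule.mem_span_singleton_self _)
  obtain ⟨hf, he⟩ := LinearIndependent.pair_iff.1 hfe (a * t' - t) (a - 1) <| by
    rw [← sub_eq_zero.2 ha]
    module
  linear_combination t' * he - hf

lemma exists_eq_span_singleton_add_smul {f e : V} {c : Submodule k V} (hc : finrank k c = 1)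
    (hce : c ≤ Submodule.span k {f, e}) (hf : f ∉ c) : ∃ t : k, c = k ∙ (e + t • f) := by
  obtain ⟨v, hv, hv0⟩ := exists_mem_ne_zero_of_finrank_ne_zero (W := c) (by lia)
  obtain ⟨s, a, rfl⟩ := Submodule.mem_span_pair.1 (hce hv)
  have ha : a ≠ 0 := by
    rintro rfl
    have hs : s ≠ 0 := by
      rintro rfl
      simp at hv0
    exact hf ((c.smul_mem_iff hs).1 (by simpa using hv))
  have hscale : a • (e + (a⁻¹ * s) • f) = s • f + a • e := by
    rw [smul_add, smul_smul, mul_inv_cancel_left₀ ha, add_comm]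
  refine ⟨a⁻¹ * s, eq_span_singleton_of_mem_of_finrank_eq_one hc ?_ ?_⟩
  · rwa [← c.smul_mem_iff ha, hscale]
  · rintro h
    rw [← hscale, h, smul_zero] at hv0
    exact hv0 rfl

lemma finrank_inf_eq_one_of_finrank_eq_two {L M : Submodule k V} (hL : finrank k L = 2)
    (hM : finrank k M = 2) (hne : M ≠ L) (hmeet : M ⊓ L ≠ ⊥) :
    finrank k (M ⊓ L : Submodule k V) = 1 := by
  have : FiniteDimensional k L := .of_finrank_eq_succ hL
  have : FiniteDimensional k M := .of_finrank_eq_succ hM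
  have hpos : finrank k (M ⊓ L : Submodule k V) ≠ 0 := mt Submodule.finrank_eq_zero.1 hmeet
  have hlt : M ⊓ L < M := inf_lt_left.2 fun h ↦
    hne (Submodule.eq_of_le_of_finrank_eq h (hM.trans hL.symm))
  have := Submodule.finrank_lt_finrank_of_lt hlt
  lia

lemma exists_isCompl_span_pair {L : Submodule k V} (hL : finrank k V = finrank k L + 2) :
    ∃ a b : V, LinearIndependent k ![a, b] ∧ IsCompl L (Submodule.span k {a, b}) := by
  have : FiniteDimensional k V := .of_finrank_eq_succ hL
  obtain ⟨C, hC⟩ := L.exists_isCompl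
  have hC2 : finrank k C = 2 := by
    have := Submodule.finrank_add_eq_of_isCompl hC
    lia
  obtain ⟨a, ha, ha0⟩ := exists_mem_ne_zero_of_finrank_ne_zero (W := C) (by lia)
  obtain ⟨b, -, hab, hspan⟩ := exists_span_pair_eq_of_finrank_eq_two hC2 ha ha0
  exact ⟨a, b, hab, hspan.symm ▸ hC⟩

end LinearAlgebra

section SesquilinearForm

variable {V : Type*} [AddCommGroup V] [Module k V] {σ : k →+* k} {B : V →ₛₗ[σ] V →ₗ[k] k}

lemma finrank_le_finrank_orthogonalBilin_add_finrank [FiniteDimensional k V]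
    (N : Submodule k V) : finrank k V ≤ finrank k (N.orthogonalBilin B) + finrank k N := by
  let b := finBasis k N
  let T : V →ₗ[k] Fin (finrank k N) → k := LinearMap.pi fun i ↦ B (b i)
  have hker : T.ker ≤ N.orthogonalBilin B := by
    intro y hy x hx
    have hb (i) : B (b i) y = 0 := congrFun hy i
    obtain ⟨a, rfl⟩ := b.mem_submodule_iff'.1 hx
    simp only [map_sum, map_smulₛₗ, LinearMap.sum_apply, LinearMap.smul_apply, hb,
      smul_zero, Finset.sum_const_zero]
  calc finrank k V = finrank k (T.range) + finrank k (T.ker) :=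
        T.finrank_range_add_finrank_ker.symm
    _ ≤ finrank k N + finrank k (N.orthogonalBilin B) := by
        gcongr
        · simpa using T.range.finrank_le
        · exact Submodule.finrank_mono hker
    _ = _ := add_comm _ _

lemma finrank_orthogonalBilin_add_finrank [FiniteDimensional k V] (hB : B.SeparatingRight)
    (N : Submodule k V) : finrank k (N.orthogonalBilin B) + finrank k N = finrank k V := by
  obtain ⟨N', hcompl⟩ := N.exists_isCompl
  have hdisj : N.orthogonalBilin B ⊓ N'.orthogonalBilin B = ⊥ := by
    refine eq_bot_iff.2 fun y ⟨hy, hy'⟩ ↦ hB y fun x ↦ ?_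
    have hx : x ∈ N ⊔ N' := hcompl.sup_eq_top ▸ Submodule.mem_top
    obtain ⟨z, hz, z', hz', rfl⟩ := Submodule.mem_sup.1 hx
    rw [map_add, LinearMap.add_apply, hy z hz, hy' z' hz', add_zero]
  have hsup := Submodule.finrank_sup_add_finrank_inf_eq (N.orthogonalBilin B) (N'.orthogonalBilin B)
  rw [hdisj, finrank_bot] at hsup
  have htop := (N.orthogonalBilin B ⊔ N'.orthogonalBilin B).finrank_le
  have hN := finrank_le_finrank_orthogonalBilin_add_finrank (B := B) N
  have hN' := finrank_le_finrank_orthogonalBilin_add_finrank (B := B) N'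
  have := Submodule.finrank_add_eq_of_isCompl hcompl
  lia

lemma finrank_ker_apply_add_one [FiniteDimensional k V] (hB : B.SeparatingRight) {v : V}
    (hv : v ≠ 0) : finrank k ((B v).ker) + 1 = finrank k V := by
  have hker : (B v).ker = (k ∙ v).orthogonalBilin B := by
    ext y
    simp only [LinearMap.mem_ker, Submodule.mem_orthogonalBilin_iff, Submodule.mem_span_singleton,
      forall_exists_index, forall_apply_eq_imp_iff, map_smulₛₗ, LinearMap.smul_apply, smul_eq_mul]
    exact ⟨fun h a ↦ by rw [h, mul_zero], fun h ↦ by simpa using h 1⟩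
  rw [hker, ← finrank_span_singleton (K := k) hv, finrank_orthogonalBilin_add_finrank hB]

/-- The `d`-dimensional subspaces of `V` on which `x ↦ B x x` vanishes: the projective
`(d - 1)`-planes on the hypersurface cut out by this form. -/
def isotropicSubspaces (B : V →ₛₗ[σ] V →ₗ[k] k) (d : ℕ) : Set (Submodule k V) :=
  {M | finrank k M = d ∧ ∀ x ∈ M, B x x = 0}

lemma span_singleton_mem_isotropicSubspaces {v : V} (hv : v ≠ 0) :
    k ∙ v ∈ isotropicSubspaces B 1 ↔ B v v = 0 := by
  refine ⟨fun h ↦ h.2 v (Submodule.mem_span_singleton_self v), fun h ↦ ?_⟩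
  refine ⟨finrank_span_singleton hv, fun x hx ↦ ?_⟩
  obtain ⟨a, rfl⟩ := Submodule.mem_span_singleton.1 hx
  rw [map_smul, map_smulₛₗ, LinearMap.smul_apply, h, smul_zero, smul_zero]

lemma apply_add_smul_self (e f : V) (t : k) :
    B (e + t • f) (e + t • f) = B e e + t * B e f + σ t * B f e + σ t * t * B f f := by
  simp only [map_add, map_smulₛₗ, LinearMap.add_apply, LinearMap.smul_apply, smul_eq_mul,
    RingHom.id_apply]
  ring

lemma isotropicSubspaces_one_le_span_pair {e f : V} (hfe : LinearIndependent k ![f, e])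
    (hf : B f f ≠ 0) :
    {c ∈ isotropicSubspaces B 1 | c ≤ Submodule.span k {f, e}} =
      (fun t : k ↦ k ∙ (e + t • f)) '' {t | B (e + t • f) (e + t • f) = 0} := by
  ext c
  constructor
  · rintro ⟨⟨hc, hiso⟩, hcW⟩
    obtain ⟨t, rfl⟩ := exists_eq_span_singleton_add_smul hc hcW fun h ↦ hf (hiso f h)
    exact ⟨t, hiso _ (Submodule.mem_span_singleton_self _), rfl⟩
  · rintro ⟨t, ht, rfl⟩
    have h0 : e + t • f ≠ 0 := fun h ↦
      one_ne_zero (LinearIndependent.pair_iff.1 hfe t 1 (by rw [← h]; module)).2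
    exact ⟨(span_singleton_mem_isotropicSubspaces h0).2 ht,
      (Submodule.span_singleton_le_iff_mem _ _).2 (Submodule.mem_span_pair.2 ⟨t, 1, by module⟩)⟩

lemma gram_det_ne_zero {e f : V} (hfe : LinearIndependent k ![f, e]) (hf : B f f ≠ 0)
    (hB : ∀ y ∈ Submodule.span k {f, e}, (∀ x ∈ Submodule.span k {f, e}, B x y = 0) → y = 0) :
    B e e * B f f - B e f * B f e ≠ 0 := by
  intro h
  have hy : B f f • e - B f e • f ∈ Submodule.span k {f, e} :=
    Submodule.mem_span_pair.2 ⟨-B f e, B f f, by module⟩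
  have hy0 : B f f • e - B f e • f = 0 := by
    refine hB _ hy fun x hx ↦ ?_
    obtain ⟨s, t, rfl⟩ := Submodule.mem_span_pair.1 hx
    simp only [map_add, map_sub, map_smulₛₗ, LinearMap.add_apply, LinearMap.smul_apply,
      smul_eq_mul, RingHom.id_apply]
    linear_combination σ t * h
  exact hf (LinearIndependent.pair_iff.1 hfe (-B f e) (B f f) (by rw [← hy0]; module)).2

variable [IsSepClosed k] {q : ℕ}

lemma apply_eq_zero_of_isotropic (hσ : IsFrobeniusPower σ q) {M : Submodule k V}
    (hM : ∀ x ∈ M, B x x = 0) {x y : V} (hx : x ∈ M) (hy : y ∈ M) : B x y = 0 := by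
  have polar (t : k) : t * B x y + σ t * B y x = 0 := by
    have h := hM _ (M.add_mem hx (M.smul_mem t hy))
    simpa [hM x hx, hM y hy, add_comm] using h
  obtain ⟨t, ht⟩ := hσ.exists_map_ne_self
  have h1 : B x y + B y x = 0 := by simpa using polar 1
  refine (mul_eq_zero.1 ?_).resolve_left (sub_ne_zero.2 ht)
  linear_combination σ t * h1 - polar t

theorem ncard_isotropicSubspaces_one_le (hσ : IsFrobeniusPower σ q) {W : Submodule k V}
    (hW : finrank k W = 2) (hB : ∀ y ∈ W, (∀ x ∈ W, B x y = 0) → y = 0) :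
    {c ∈ isotropicSubspaces B 1 | c ≤ W}.ncard = q + 1 := by
  obtain ⟨f, hfW, hf⟩ : ∃ f ∈ W, B f f ≠ 0 := by
    by_contra! h
    have hbot : W = ⊥ := eq_bot_iff.2 fun y hy ↦
      hB y hy fun x hx ↦ apply_eq_zero_of_isotropic hσ h hx hy
    rw [hbot, finrank_bot] at hW
    lia
  have hf0 : f ≠ 0 := fun h ↦ hf (by rw [h, map_zero])
  obtain ⟨e, heW, hind, hspan⟩ := exists_span_pair_eq_of_finrank_eq_two hW hfW hf0
  rw [← hspan] at hB
  rw [← hspan, isotropicSubspaces_one_le_span_pair hind hf,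
    Set.ncard_image_of_injective _ (injective_span_singleton_add_smul hind)]
  simp only [apply_add_smul_self]
  exact hσ.ncard_zeros hf (gram_det_ne_zero hind hf hB)

end SesquilinearForm

section Star

variable {V : Type*} [AddCommGroup V] [Module k V] {σ : k →+* k} {B : V →ₛₗ[σ] V →ₗ[k] k}
  {q : ℕ} {v : V} {W : Submodule k V}

lemma le_ker_apply_of_mem_isotropicSubspaces [IsSepClosed k] (hσ : IsFrobeniusPower σ q)
    {M : Submodule k V} {d : ℕ} (hM : M ∈ isotropicSubspaces B d) (hv : v ∈ M) :
    M ≤ (B v).ker :=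
  fun _ hx ↦ apply_eq_zero_of_isotropic hσ hM.2 hv hx

lemma bijOn_sup_span_singleton [IsSepClosed k] [FiniteDimensional k V]
    (hσ : IsFrobeniusPower σ q) (hker : (B v).ker ≤ (B.flip v).ker) (hvW : v ∉ W)
    (hsup : W ⊔ k ∙ v = (B v).ker) (d : ℕ) :
    Set.BijOn (· ⊔ k ∙ v) {N ∈ isotropicSubspaces B d | N ≤ W}
      {M ∈ isotropicSubspaces B (d + 1) | v ∈ M} := by
  have hvc : v ∈ k ∙ v := Submodule.mem_span_singleton_self v
  have hv : B v v = 0 := hsup.le (Submodule.mem_sup_right hvc)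
  have hdim {N : Submodule k V} (hN : N ≤ W) :
      finrank k (N ⊔ k ∙ v : Submodule k V) = finrank k N + 1 :=
    Submodule.finrank_sup_span_singleton fun h ↦ hvW (hN h)
  have hrec {M : Submodule k V} (hM : M ∈ isotropicSubspaces B (d + 1)) (hvM : v ∈ M) :
      M ⊓ W ⊔ k ∙ v = M := by
    rw [inf_sup_assoc_of_le W ((Submodule.span_singleton_le_iff_mem v M).2 hvM), hsup,
      inf_eq_left.2 (le_ker_apply_of_mem_isotropicSubspaces hσ hM hvM)]
  have hinv : Set.InvOn (· ⊓ W) (· ⊔ k ∙ v) {N ∈ isotropicSubspaces B d | N ≤ W}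
      {M ∈ isotropicSubspaces B (d + 1) | v ∈ M} := by
    refine ⟨fun N hN ↦ ?_, fun M hM ↦ hrec hM.1 hM.2⟩
    change (N ⊔ k ∙ v) ⊓ W = N
    rw [sup_inf_assoc_of_le _ hN.2, inf_comm,
      (Submodule.disjoint_span_singleton_of_notMem hvW).eq_bot, sup_bot_eq]
  refine hinv.bijOn (fun N ⟨⟨hN, hiso⟩, hNW⟩ ↦ ?_) (fun M ⟨hM, hvM⟩ ↦ ?_)
  · refine ⟨⟨by rw [hdim hNW, hN], fun x hx ↦ ?_⟩, Submodule.mem_sup_right hvc⟩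
    obtain ⟨y, hy, z, hz, rfl⟩ := Submodule.mem_sup.1 hx
    obtain ⟨a, rfl⟩ := Submodule.mem_span_singleton.1 hz
    have hvy : B v y = 0 := hsup.le (Submodule.mem_sup_left (hNW hy))
    have hyv : B y v = 0 := hker hvy
    simp only [map_add, map_smul, map_smulₛₗ, LinearMap.add_apply, LinearMap.smul_apply, hv, hvy,
      hyv, hiso y hy, smul_zero, add_zero]
  · have h := hdim (inf_le_right : M ⊓ W ≤ W)
    rw [hrec hM hvM, hM.1] at h
    exact ⟨⟨by lia, fun x hx ↦ hM.2 x hx.1⟩, inf_le_right⟩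

lemma eq_zero_of_forall_apply_eq_zero_of_sup_eq_ker (hB : B.SeparatingRight)
    (hker : (B v).ker ≤ (B.flip v).ker) (hvW : v ∉ W)
    (hsup : W ⊔ k ∙ v = (B v).ker) {y : V} (hy : y ∈ W)
    (hWy : ∀ x ∈ W, B x y = 0) : y = 0 := by
  have hv0 : v ≠ 0 := fun h ↦ hvW (h ▸ W.zero_mem)
  have hvy : B v y = 0 := hsup.le (Submodule.mem_sup_left hy)
  have hkery {x : V} (hx : B v x = 0) : B x y = 0 := by
    obtain ⟨w, hw, z, hz, rfl⟩ := Submodule.mem_sup.1 (hsup.ge hx)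
    obtain ⟨a, rfl⟩ := Submodule.mem_span_singleton.1 hz
    rw [map_add, map_smulₛₗ, LinearMap.add_apply, LinearMap.smul_apply, hvy, hWy w hw, smul_zero,
      add_zero]
  obtain ⟨z, hz⟩ : ∃ z, B z v ≠ 0 := by
    by_contra! h
    exact hv0 (hB v h)
  have hz' : B v z ≠ 0 := fun h ↦ hz (hker h)
  have hsub : y - (B z y / B z v) • v = 0 := by
    refine hB _ fun x ↦ ?_
    have hx : B v (x - (B v x / B v z) • z) = 0 := by
      rw [map_sub, map_smul, smul_eq_mul, div_mul_cancel₀ _ hz', sub_self]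
    have hxy := hkery hx
    have hxv : B (x - (B v x / B v z) • z) v = 0 := hker hx
    simp only [map_sub, map_smulₛₗ, LinearMap.sub_apply, LinearMap.smul_apply, smul_eq_mul,
      RingHom.id_apply] at hxy hxv ⊢
    rw [sub_eq_zero.1 hxy, sub_eq_zero.1 hxv]
    field_simp
    ring
  exact Submodule.disjoint_def.1 (Submodule.disjoint_span_singleton_of_notMem hvW) y hy
    (Submodule.mem_span_singleton.2 ⟨_, (sub_eq_zero.1 hsub).symm⟩)

theorem ncard_isotropicSubspaces_two_mem [IsSepClosed k] (hσ : IsFrobeniusPower σ q)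
    (hV : finrank k V = 4) (hB : B.SeparatingRight) (hv0 : v ≠ 0) (hv : B v v = 0)
    (hker : (B v).ker ≤ (B.flip v).ker) :
    {M ∈ isotropicSubspaces B 2 | v ∈ M}.ncard = q + 1 := by
  have : FiniteDimensional k V := .of_finrank_eq_succ hV
  obtain ⟨W, hdisj, hsup⟩ := IsModularLattice.exists_disjoint_and_sup_eq
    ((Submodule.span_singleton_le_iff_mem v ((B v).ker)).2 hv)
  rw [sup_comm] at hsup
  have hvW : v ∉ W := (Submodule.disjoint_span_singleton' hv0).1 hdisj.symm
  have hW : finrank k W = 2 := by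
    have h := finrank_ker_apply_add_one hB hv0
    rw [← hsup, Submodule.finrank_sup_span_singleton hvW] at h
    lia
  rw [← (bijOn_sup_span_singleton hσ hker hvW hsup 1).ncard_eq]
  exact ncard_isotropicSubspaces_one_le hσ hW fun y hy ↦
    eq_zero_of_forall_apply_eq_zero_of_sup_eq_ker hB hker hvW hsup hy

end Star

section Tangency

variable {V : Type*} [AddCommGroup V] [Module k V] {σ : k →+* k}

/-- For `v` in an isotropic subspace `L` with complement `⟨a, b⟩`, the vector
`B v a • b - B v b • a` spans `ker (B v)` modulo `L`. Pairing it with `v` measures whether the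
right orthogonal `ker (B v)` of `v` lies in its left orthogonal; as `B` is `σ`-linear in its left
argument, the result is sesquilinear with respect to `σ ∘ σ`. -/
def tangencyForm (B : V →ₛₗ[σ] V →ₗ[k] k) (a b : V) : V →ₛₗ[σ.comp σ] V →ₗ[k] k :=
  LinearMap.mk₂'ₛₗ (σ.comp σ) (RingHom.id k) (fun u v ↦ B (B u a • b - B u b • a) v)
    (fun u u' v ↦ by
      simp only [map_add, map_sub, map_smulₛₗ, LinearMap.add_apply, LinearMap.sub_apply,
        LinearMap.smul_apply, smul_eq_mul]
      ring)
    (fun c u v ↦ by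
      simp only [map_sub, map_smulₛₗ, LinearMap.sub_apply, LinearMap.smul_apply, smul_eq_mul,
        map_mul, RingHom.comp_apply]
      ring)
    (fun u v v' ↦ map_add _ v v') (fun c u v ↦ map_smul _ c v)

variable {B : V →ₛₗ[σ] V →ₗ[k] k} {q : ℕ} {L : Submodule k V} {a b v : V}

lemma tangencyForm_apply (u v : V) : tangencyForm B a b u v = B (B u a • b - B u b • a) v := rfl

lemma ker_apply_eq_sup_span_singleton [IsSepClosed k] [FiniteDimensional k V]
    (hσ : IsFrobeniusPower σ q) (hB : B.SeparatingRight) (hL : ∀ x ∈ L, B x x = 0)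
    (hab : LinearIndependent k ![a, b]) (hcompl : IsCompl L (Submodule.span k {a, b}))
    (hv : v ∈ L) (hv0 : v ≠ 0) :
    L ⊔ k ∙ (B v a • b - B v b • a) = (B v).ker := by
  have hVL : finrank k V = finrank k L + 2 := by
    rw [← Submodule.finrank_add_eq_of_isCompl hcompl, ← Matrix.range_cons_cons_empty a b ![],
      finrank_span_eq_card hab, Fintype.card_fin]
  have hker := finrank_ker_apply_add_one hB hv0
  have hLker : L ≤ (B v).ker := fun x hx ↦ apply_eq_zero_of_isotropic hσ hL hv hx
  have hφL : B v a • b - B v b • a ∉ L := by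
    intro hφ
    have hφ0 : B v a • b - B v b • a = 0 := Submodule.disjoint_def.1 hcompl.disjoint _ hφ <|
      Submodule.mem_span_pair.2 ⟨-B v b, B v a, by module⟩
    obtain ⟨hb, ha⟩ := LinearIndependent.pair_iff.1 hab (-B v b) (B v a) (by rw [← hφ0]; module)
    have htop : (B v).ker = ⊤ := by
      rw [eq_top_iff, ← hcompl.sup_eq_top]
      exact sup_le hLker (Submodule.span_le.2 (Set.pair_subset ha (neg_eq_zero.1 hb)))
    rw [htop, finrank_top] at hker
    lia
  refine Submodule.eq_of_le_of_finrank_eq (sup_le hLker ?_) ?_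
  · rw [Submodule.span_singleton_le_iff_mem, LinearMap.mem_ker, map_sub, map_smul, map_smul,
      smul_eq_mul, smul_eq_mul, mul_comm, sub_self]
  · rw [Submodule.finrank_sup_span_singleton hφL]
    lia

lemma ker_apply_le_ker_flip_iff_tangencyForm_eq_zero [IsSepClosed k] [FiniteDimensional k V]
    (hσ : IsFrobeniusPower σ q) (hB : B.SeparatingRight) (hL : ∀ x ∈ L, B x x = 0)
    (hab : LinearIndependent k ![a, b]) (hcompl : IsCompl L (Submodule.span k {a, b}))
    {u : V} (hu : u ∈ L) (hu0 : u ≠ 0) (hv : v ∈ L) :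
    (B u).ker ≤ (B.flip v).ker ↔ tangencyForm B a b u v = 0 := by
  rw [← ker_apply_eq_sup_span_singleton hσ hB hL hab hcompl hu hu0, sup_le_iff,
    Submodule.span_singleton_le_iff_mem, LinearMap.mem_ker, LinearMap.flip_apply,
    ← tangencyForm_apply]
  exact and_iff_right fun x hx ↦ apply_eq_zero_of_isotropic hσ hL hx hv

lemma eq_zero_of_forall_tangencyForm_eq_zero [IsSepClosed k] [FiniteDimensional k V]
    (hσ : IsFrobeniusPower σ q) (hB : B.SeparatingRight) (hL : ∀ x ∈ L, B x x = 0)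
    (hab : LinearIndependent k ![a, b]) (hcompl : IsCompl L (Submodule.span k {a, b}))
    (hL1 : 1 < finrank k L) (hv : v ∈ L) (hLv : ∀ u ∈ L, tangencyForm B a b u v = 0) : v = 0 := by
  by_contra hv0
  let K := (B.flip v).ker
  have hKtop : K ≠ ⊤ := fun h ↦ hv0 (hB v fun x ↦ (h ▸ Submodule.mem_top : x ∈ K))
  have hKlt := Submodule.finrank_lt hKtop
  have hkerK {u : V} (hu : u ∈ L) (hu0 : u ≠ 0) : (B u).ker = K := by
    have hdim := finrank_ker_apply_add_one hB hu0
    exact Submodule.eq_of_le_of_finrank_le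
      ((ker_apply_le_ker_flip_iff_tangencyForm_eq_zero hσ hB hL hab hcompl hu hu0 hv).2
        (hLv u hu)) (by lia)
  have hKL : K ≤ L.orthogonalBilin B := by
    intro x hx u hu
    obtain rfl | hu0 := eq_or_ne u 0
    · rw [map_zero, LinearMap.zero_apply]
    · exact (hkerK hu hu0).ge hx
  have hK := finrank_ker_apply_add_one hB hv0
  have hLorth := finrank_orthogonalBilin_add_finrank hB L
  have := Submodule.finrank_mono hKL
  rw [← hkerK hv hv0] at this
  lia

theorem ncard_isotropicSubspaces_one_tangencyForm_le [IsSepClosed k] [FiniteDimensional k V]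
    (hσ : IsFrobeniusPower σ q) (hB : B.SeparatingRight) (hL : L ∈ isotropicSubspaces B 2)
    (hab : LinearIndependent k ![a, b]) (hcompl : IsCompl L (Submodule.span k {a, b})) :
    {c ∈ isotropicSubspaces (tangencyForm B a b) 1 | c ≤ L}.ncard = q * q + 1 :=
  ncard_isotropicSubspaces_one_le (hσ.comp hσ) hL.1 fun _ hv hLv ↦
    eq_zero_of_forall_tangencyForm_eq_zero hσ hB hL.2 hab hcompl (by rw [hL.1]; lia) hv hLv

end Tangency

section LinesMeetingALine

variable {V : Type*} [AddCommGroup V] [Module k V] [IsSepClosed k] {σ : k →+* k}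
  {B : V →ₛₗ[σ] V →ₗ[k] k} {q : ℕ} {L M : Submodule k V}

lemma ker_apply_le_ker_flip_of_mem_inf (hσ : IsFrobeniusPower σ q) (hV : finrank k V = 4)
    (hB : B.SeparatingRight) (hL : L ∈ isotropicSubspaces B 2) (hM : M ∈ isotropicSubspaces B 2)
    (hinf : finrank k (M ⊓ L : Submodule k V) = 1) {v : V} (hv : v ∈ M ⊓ L) (hv0 : v ≠ 0) :
    (B v).ker ≤ (B.flip v).ker := by
  have : FiniteDimensional k V := .of_finrank_eq_succ hV
  have hsup : M ⊔ L = (B v).ker := by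
    refine Submodule.eq_of_le_of_finrank_eq
      (sup_le (le_ker_apply_of_mem_isotropicSubspaces hσ hM hv.1)
        (le_ker_apply_of_mem_isotropicSubspaces hσ hL hv.2)) ?_
    have hdim := Submodule.finrank_sup_add_finrank_inf_eq M L
    have hker := finrank_ker_apply_add_one hB hv0
    rw [hinf, hM.1, hL.1] at hdim
    lia
  rw [← hsup]
  exact sup_le (fun x hx ↦ apply_eq_zero_of_isotropic hσ hM.2 hx hv.1)
    (fun x hx ↦ apply_eq_zero_of_isotropic hσ hL.2 hx hv.2)

lemma ncard_isotropicSubspaces_two_inf_eq_span_singleton (hσ : IsFrobeniusPower σ q)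
    (hV : finrank k V = 4) (hB : B.SeparatingRight) (hL : L ∈ isotropicSubspaces B 2) {v : V}
    (hv : v ∈ L) (hv0 : v ≠ 0) (hker : (B v).ker ≤ (B.flip v).ker) :
    {M ∈ {M ∈ isotropicSubspaces B 2 | M ≠ L ∧ M ⊓ L ≠ ⊥} | M ⊓ L = k ∙ v}.ncard = q := by
  have hstar : {M ∈ {M ∈ isotropicSubspaces B 2 | M ≠ L ∧ M ⊓ L ≠ ⊥} | M ⊓ L = k ∙ v} =
      {M ∈ isotropicSubspaces B 2 | v ∈ M} \ {L} := by
    ext M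
    constructor
    · rintro ⟨⟨hM, hne, -⟩, hinf⟩
      exact ⟨⟨hM, (hinf.ge (Submodule.mem_span_singleton_self v)).1⟩, hne⟩
    · rintro ⟨⟨hM, hvM⟩, hne⟩
      have hmeet : M ⊓ L ≠ ⊥ := Submodule.ne_bot_iff _ |>.2 ⟨v, ⟨hvM, hv⟩, hv0⟩
      exact ⟨⟨hM, hne, hmeet⟩, eq_span_singleton_of_mem_of_finrank_eq_one
        (finrank_inf_eq_one_of_finrank_eq_two hL.1 hM.1 hne hmeet) ⟨hvM, hv⟩ hv0⟩
  have hLstar : L ∈ {M ∈ isotropicSubspaces B 2 | v ∈ M} := ⟨hL, hv⟩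
  rw [hstar, Set.ncard_sdiff_singleton_of_mem hLstar,
    ncard_isotropicSubspaces_two_mem hσ hV hB hv0 (hL.2 v hv) hker, Nat.add_sub_cancel]

theorem count_lines_meeting_a_line_general (hσ : IsFrobeniusPower σ q) (hV : finrank k V = 4)
    (hB : B.SeparatingRight) (hL : L ∈ isotropicSubspaces B 2) :
    {M ∈ isotropicSubspaces B 2 | M ≠ L ∧ M ⊓ L ≠ ⊥}.ncard = q * (q ^ 2 + 1) := by
  have : FiniteDimensional k V := .of_finrank_eq_succ hV
  obtain ⟨a, b, hab, hcompl⟩ := exists_isCompl_span_pair (L := L) (by rw [hV, hL.1])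
  have hq : q ≠ 0 := by
    have := hσ.two_le
    lia
  have htangent {v : V} (hv : v ∈ L) (hv0 : v ≠ 0) :
      (B v).ker ≤ (B.flip v).ker ↔ k ∙ v ∈ isotropicSubspaces (tangencyForm B a b) 1 := by
    rw [span_singleton_mem_isotropicSubspaces hv0,
      ker_apply_le_ker_flip_iff_tangencyForm_eq_zero hσ hB hL.2 hab hcompl hv hv0 hv]
  have hmaps : Set.MapsTo (· ⊓ L) {M ∈ isotropicSubspaces B 2 | M ≠ L ∧ M ⊓ L ≠ ⊥}
      {c ∈ isotropicSubspaces (tangencyForm B a b) 1 | c ≤ L} := by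
    rintro M ⟨hM, hne, hmeet⟩
    have hinf := finrank_inf_eq_one_of_finrank_eq_two hL.1 hM.1 hne hmeet
    obtain ⟨v, hv, hv0⟩ := (M ⊓ L).exists_mem_ne_zero_of_ne_bot hmeet
    refine ⟨show M ⊓ L ∈ _ from ?_, inf_le_right⟩
    rw [eq_span_singleton_of_mem_of_finrank_eq_one hinf hv hv0, ← htangent hv.2 hv0]
    exact ker_apply_le_ker_flip_of_mem_inf hσ hV hB hL hM hinf hv hv0
  rw [ncard_eq_mul_of_ncard_fiber_eq hq hmaps,
    ncard_isotropicSubspaces_one_tangencyForm_le hσ hB hL hab hcompl]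
  · ring
  · rintro c ⟨hc, hcL⟩
    obtain ⟨v, hv, hv0⟩ := exists_mem_ne_zero_of_finrank_ne_zero (hc.1.trans_ne one_ne_zero)
    obtain rfl := eq_span_singleton_of_mem_of_finrank_eq_one hc.1 hv hv0
    exact ncard_isotropicSubspaces_two_inf_eq_span_singleton hσ hV hB hL (hcL hv) hv0
      ((htangent (hcL hv) hv0).2 hc)

end LinesMeetingALine

section FrobeniusForm

lemma toLinearMapₛₗ₂'_apply_self {σ : k →+* k} {q : ℕ} (hσ : IsFrobeniusPower σ q)
    (A : Matrix (Fin 4) (Fin 4) k) (x : Fin 4 → k) :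
    A.toLinearMapₛₗ₂' k σ (RingHom.id k) x x = frobForm q A x := by
  simp only [Matrix.toLinearMapₛₗ₂'_apply, frobForm, smul_eq_mul, hσ.map_eq_pow, RingHom.id_apply]
  exact Finset.sum_congr rfl fun i _ ↦ Finset.sum_congr rfl fun j _ ↦ by ring

lemma separatingRight_toLinearMapₛₗ₂' {ι : Type*} [Fintype ι] [DecidableEq ι] {A : Matrix ι ι k}
    (hA : IsUnit A) (σ : k →+* k) :
    (A.toLinearMapₛₗ₂' k σ (RingHom.id k)).SeparatingRight := by
  intro y hy
  refine Matrix.mulVec_injective_iff_isUnit.2 hA (funext fun i ↦ ?_)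
  simpa [Matrix.toLinearMapₛₗ₂'_apply, Matrix.mulVec, dotProduct, Pi.single_apply, mul_comm]
    using hy (Pi.single i 1)

lemma isLineOn_extremalCone_iff {σ : k →+* k} {q : ℕ} (hσ : IsFrobeniusPower σ q)
    (A : Matrix (Fin 4) (Fin 4) k) (M : Submodule k (Fin 4 → k)) :
    IsLineOn (extremalCone k q A) M ↔
      M ∈ isotropicSubspaces (A.toLinearMapₛₗ₂' k σ (RingHom.id k)) 2 := by
  simp only [isotropicSubspaces, Set.mem_ofPred_eq, toLinearMapₛₗ₂'_apply_self hσ]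
  rfl

end FrobeniusForm

end Field

/-- Let `X` be a smooth extremal surface of degree `q+1` in
ℙ³(k) and let `L` be any line on `X`.  Then the set of lines `M` on `X` with
`M ≠ L` and `M` meeting `L` has cardinality exactly `q(q²+1)`. -/
theorem count_lines_meeting_a_line {k : Type*} [Field k] [IsAlgClosed k]
    (p e q : ℕ) (hp : p.Prime) (hchar : CharP k p) (he : 1 ≤ e) (hq : q = p ^ e)
    (A : Matrix (Fin 4) (Fin 4) k) (hA : IsUnit A)
    (L : Submodule k (Fin 4 → k)) (hL : IsLineOn (extremalCone k q A) L) :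
    {M : Submodule k (Fin 4 → k) |
        IsLineOn (extremalCone k q A) M ∧ M ≠ L ∧ MeetsLine M L}.ncard
      = q * (q ^ 2 + 1) := by
  subst hq
  have : Fact p.Prime := ⟨hp⟩
  have hσ : IsFrobeniusPower (iterateFrobenius k p e) (p ^ e) := .iterateFrobenius (by lia)
  simp only [isLineOn_extremalCone_iff hσ, MeetsLine] at hL ⊢
  exact count_lines_meeting_a_line_general hσ (finrank_fin_fun k)
    (separatingRight_toLinearMapₛₗ₂' hA _) hL
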